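/- For all integers j ≥ i ≥ 0, l ≥ 0, k ≥ 0 and t ≥ 0, the identity [j−i+k+1]·[l+1 choose k−t] = [l choose k−t]·[j−i+t+1] + [l choose k−t−1]·[j−i+l+t+2] holds in the field ℚ(t) of rational functions. (These are the i+1 equations obtained by comparing coefficients of basis webs in the inductive proof of the rectangular relations of the quantum sl(n) web space, whose solution is a(i,m) = [l choose k−m].) -/

import Mathlib

/-- The quantum integer `[m] = (t^m - t^(-m))/(t - t⁻¹)` in the field `ℚ(t)`. -/
noncomputable def qint (m : ℤ) : RatFunc ℚ :=
  (RatFunc.X ^ m - RatFunc.X ^ (-m)) / (RatFunc.X - RatFunc.X⁻¹)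

/-- The quantum factorial `[m]! = [m][m-1]⋯[2][1]`, with `[0]! = 1`. -/
noncomputable def qfact (m : ℕ) : RatFunc ℚ :=
  ∏ i ∈ Finset.range m, qint (i + 1)

/-- The quantum binomial coefficient `[a choose b] = [a]!/([a-b]![b]!)` when `0 ≤ b ≤ a`,
and `0` when `b < 0` or `b > a`. -/
noncomputable def qbinom (a b : ℤ) : RatFunc ℚ :=
  if 0 ≤ b ∧ b ≤ a then qfact a.toNat / (qfact (a - b).toNat * qfact b.toNat) else 0

theorem X_pow_ne_one (n : ℕ) (hn : 0 < n) : (RatFunc.X : RatFunc ℚ) ^ n ≠ 1 := by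
  intro h
  have h2 : (algebraMap (Polynomial ℚ) (RatFunc ℚ)) (Polynomial.X ^ n) =
      algebraMap (Polynomial ℚ) (RatFunc ℚ) 1 := by
    rw [map_pow, map_one, RatFunc.algebraMap_X, h]
  have h3 := congrArg Polynomial.natDegree (RatFunc.algebraMap_injective ℚ h2)
  rw [Polynomial.natDegree_X_pow, Polynomial.natDegree_one] at h3
  omega

theorem sub_zpow_ne (n : ℕ) (hn : 0 < n) :
    (RatFunc.X : RatFunc ℚ) ^ (n : ℤ) - RatFunc.X ^ (-(n : ℤ)) ≠ 0 := by
  intro h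
  have hX : (RatFunc.X : RatFunc ℚ) ≠ 0 := RatFunc.X_ne_zero
  apply X_pow_ne_one (n + n) (by omega)
  have h1 : (RatFunc.X : RatFunc ℚ) ^ n = (RatFunc.X ^ n)⁻¹ := by
    rw [zpow_neg, zpow_natCast] at h
    exact sub_eq_zero.mp h
  have h2 : (RatFunc.X : RatFunc ℚ) ^ n ≠ 0 := pow_ne_zero _ hX
  rw [pow_add]
  nth_rewrite 1 [h1]
  exact inv_mul_cancel₀ h2

theorem den_ne : (RatFunc.X : RatFunc ℚ) - RatFunc.X⁻¹ ≠ 0 := by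
  have := sub_zpow_ne 1 one_pos
  simpa using this

theorem qint_ne (n : ℕ) : qint ((n : ℤ) + 1) ≠ 0 := by
  have := sub_zpow_ne (n + 1) (by omega)
  push_cast at this
  exact div_ne_zero this den_ne

theorem qfact_ne (n : ℕ) : qfact n ≠ 0 :=
  Finset.prod_ne_zero_iff.mpr fun i _ => qint_ne i

theorem qfact_succ (n : ℕ) : qfact (n + 1) = qfact n * qint ((n : ℤ) + 1) := by
  unfold qfact
  rw [Finset.prod_range_succ]

theorem qint_id (N s r : ℤ) :
    qint (N + s) * qint (r + s) = qint r * qint N + qint s * qint (N + (r + s)) := by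
  have hX : (RatFunc.X : RatFunc ℚ) ≠ 0 := RatFunc.X_ne_zero
  have hd := den_ne
  unfold qint
  rw [div_mul_div_comm, div_mul_div_comm, div_mul_div_comm, ← add_div]
  congr 1
  simp only [neg_add, zpow_add₀ hX, zpow_neg]
  have hN : (RatFunc.X : RatFunc ℚ) ^ N ≠ 0 := zpow_ne_zero _ hX
  have hs : (RatFunc.X : RatFunc ℚ) ^ s ≠ 0 := zpow_ne_zero _ hX
  have hr : (RatFunc.X : RatFunc ℚ) ^ r ≠ 0 := zpow_ne_zero _ hX
  generalize (RatFunc.X : RatFunc ℚ) ^ N = x at *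
  generalize (RatFunc.X : RatFunc ℚ) ^ s = y at *
  generalize (RatFunc.X : RatFunc ℚ) ^ r = z at *
  field_simp
  ring

theorem qbinom_nat (a b : ℕ) (c d : ℤ) (hc : c = a + b) (hd : d = b) :
    qbinom c d = qfact (a + b) / (qfact a * qfact b) := by
  subst hc hd
  unfold qbinom
  rw [if_pos (by omega)]
  congr 2
  congr 1
  omega

theorem qbinom_out (a b : ℤ) (h : b < 0 ∨ a < b) : qbinom a b = 0 := by
  unfold qbinom
  rw [if_neg (by omega)]

theorem qfact_zero : qfact 0 = 1 := by simp [qfact]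

theorem qmain (N s l : ℤ) (hl : 0 ≤ l) :
    qint (N + s) * qbinom (l + 1) s =
      qbinom l s * qint N + qbinom l (s - 1) * qint (N + (l + 1)) := by
  rcases lt_trichotomy s 0 with h | h | h
  · rw [qbinom_out _ _ (by omega), qbinom_out _ _ (by omega), qbinom_out _ _ (by omega)]
    ring
  · subst h
    obtain ⟨n, rfl⟩ := Int.eq_ofNat_of_zero_le hl
    rw [qbinom_nat (n + 1) 0 _ _ (by push_cast; ring) (by simp),
      qbinom_nat n 0 _ _ (by simp) (by simp), qbinom_out _ _ (by omega)]
    have h1 := qfact_ne n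
    have h2 := qfact_ne (n + 1)
    simp [qfact_zero, h1, h2]
  · obtain ⟨b, hb⟩ := Int.eq_ofNat_of_zero_le (show 0 ≤ s - 1 by omega)
    obtain rfl : s = b + 1 := by omega
    rcases lt_trichotomy l b with h' | h' | h'
    · rw [qbinom_out _ _ (by omega), qbinom_out _ _ (by omega), qbinom_out _ _ (by omega)]
      ring
    · subst h'
      rw [qbinom_nat 0 (b + 1) _ _ (by push_cast; ring) (by simp), qbinom_out (b : ℤ) (b + 1) (by omega),
        qbinom_nat 0 b _ _ (by simp) (by simp)]
      have h1 := qfact_ne b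
      have h2 := qfact_ne (b + 1)
      simp [qfact_zero, h1, h2]
    · obtain ⟨a, ha⟩ := Int.eq_ofNat_of_zero_le (show 0 ≤ l - b - 1 by omega)
      obtain rfl : l = a + b + 1 := by omega
      rw [qbinom_nat (a + 1) (b + 1) _ _ (by push_cast; ring) (by push_cast; ring),
        qbinom_nat a (b + 1) _ _ (by push_cast; ring) (by push_cast; ring),
        qbinom_nat (a + 1) b _ _ (by push_cast; ring) (by push_cast; ring)]
      have e1 : a + 1 + (b + 1) = (a + b + 1) + 1 := by ring
      have e2 : a + (b + 1) = a + b + 1 := by ring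
      have e3 : a + 1 + b = a + b + 1 := by ring
      rw [e1, e2, e3, qfact_succ (a + b + 1), qfact_succ a, qfact_succ b]
      have key := qint_id N (b + 1) (a + 1)
      have e4 : (a : ℤ) + 1 + (b + 1) = ((a + b + 1 : ℕ) : ℤ) + 1 := by push_cast; ring
      have e5 : (a : ℤ) + b + 1 + 1 = ((a + b + 1 : ℕ) : ℤ) + 1 := by push_cast; ring
      rw [e4] at key
      rw [e5]
      have h1 := qfact_ne a
      have h2 := qfact_ne b
      have h3 := qint_ne a
      have h4 := qint_ne b
      generalize qint (((a + b + 1 : ℕ) : ℤ) + 1) = u at *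
      generalize qint (N + (((a + b + 1 : ℕ) : ℤ) + 1)) = v at *
      generalize qint (N + ((b : ℤ) + 1)) = w at *
      generalize qint ((a : ℤ) + 1) = p at *
      generalize qint ((b : ℤ) + 1) = q at *
      generalize qfact (a + b + 1) = F at *
      generalize qfact a = A at *
      generalize qfact b = B at *
      generalize qint N = M at *
      field_simp
      linear_combination F * key

/-- For all integers `j ≥ i ≥ 0`, `l ≥ 0`, `k ≥ 0`, `t ≥ 0`,
`[j-i+k+1]·[l+1 choose k-t] = [l choose k-t]·[j-i+t+1] + [l choose k-t-1]·[j-i+l+t+2]`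
holds in `ℚ(t)`. -/
theorem rectangular_coefficient_equations (i j l k t : ℤ)
    (hji : i ≤ j) (hi : 0 ≤ i) (hl : 0 ≤ l) (hk : 0 ≤ k) (ht : 0 ≤ t) :
    qint (j - i + k + 1) * qbinom (l + 1) (k - t) =
      qbinom l (k - t) * qint (j - i + t + 1) +
        qbinom l (k - t - 1) * qint (j - i + l + t + 2) := by
  have h := qmain (j - i + t + 1) (k - t) l hl
  rw [show j - i + t + 1 + (k - t) = j - i + k + 1 by ring,
    show j - i + t + 1 + (l + 1) = j - i + l + t + 2 by ring] at h
  exact h
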